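/- Let p be a floppy graph metric with vertex set V and edge set E such that the set [V]² \ E is at most countable. Then for any indexed family (F_e)_{e ∈ [V]² \ E} of dense subsets of the half-line (0,∞), there exists an injective function r ∈ Π_{e ∈ [V]² \ E} F_e such that p ∪ r is a full metric on V. -/

import Mathlib

open scoped Classical

universe u

namespace GraphMetricPaper

variable {X : Type u}

/-- The vertex set `V = ⋃ E` of a graph given by an adjacency relation `E`. -/
def Vtx (E : X → X → Prop) : Set X := {x | ∃ y, E x y}

/-- Two points are joined by a walk in the graph `E`. -/
def Joined (E : X → X → Prop) (x y : X) : Prop :=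
  ∃ (n : ℕ) (c : ℕ → X), c 0 = x ∧ c n = y ∧ ∀ i, i < n → E (c i) (c (i + 1))

/-- The set of weights of walks from `x` to `y`. -/
def walkSums (E : X → X → Prop) (d : X → X → ℝ) (x y : X) : Set ℝ :=
  {s | ∃ (n : ℕ) (c : ℕ → X), c 0 = x ∧ c n = y ∧ (∀ i, i < n → E (c i) (c (i + 1))) ∧
    s = ∑ i ∈ Finset.range n, d (c i) (c (i + 1))}

/-- The shortest-path pseudometric `d̂` determined by a weight function `d` on a graph `E`. -/
noncomputable def hatd (E : X → X → Prop) (d : X → X → ℝ) (x y : X) : ℝ :=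
  sInf (walkSums E d x y)

/-- The function `ď` bounding the possible extensions of `d` from below:
`ď(x,y) = sup_{ab ∈ E} max {0, d(ab) - d̂(a,x) - d̂(y,b)}`. -/
noncomputable def checkd (E : X → X → Prop) (d : X → X → ℝ) (x y : X) : ℝ :=
  sSup ({0} ∪ {r | ∃ a b, E a b ∧ r = d a b - hatd E d a x - hatd E d y b})

/-- The pseudometric `d̈` on doubletons:
`d̈(xy,uv) = min {d̂(x,u) + d̂(y,v), d̂(x,v) + d̂(y,u)}`. -/
noncomputable def ddot (E : X → X → Prop) (d : X → X → ℝ) (x y u v : X) : ℝ :=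
  min (hatd E d x u + hatd E d y v) (hatd E d x v + hatd E d y u)

/-- `d` is a graph pseudometric with edge relation `E`:  `E` is a (symmetric, irreflexive)
connected graph, `d` is a nonnegative symmetric weight on the edges, and `d = d̂` on edges. -/
structure IsGraphPseudometric (E : X → X → Prop) (d : X → X → ℝ) : Prop where
  symm : ∀ ⦃a b⦄, E a b → E b a
  irrefl : ∀ a, ¬ E a a
  wt_symm : ∀ ⦃a b⦄, E a b → d a b = d b a
  nonneg : ∀ ⦃a b⦄, E a b → 0 ≤ d a b
  connected : ∀ x ∈ Vtx E, ∀ y ∈ Vtx E, Joined E x y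
  edge_eq : ∀ ⦃a b⦄, E a b → d a b = hatd E d a b

/-- A graph metric is a graph pseudometric with strictly positive weights. -/
def IsGraphMetric (E : X → X → Prop) (d : X → X → ℝ) : Prop :=
  IsGraphPseudometric E d ∧ ∀ ⦃a b⦄, E a b → 0 < d a b

/-- A floppy graph pseudometric: `ď(x,y) < d̂(x,y)` for every `xy ∈ [V]² \ E`. -/
def FloppyPseudometric (E : X → X → Prop) (d : X → X → ℝ) : Prop :=
  IsGraphPseudometric E d ∧
    ∀ x ∈ Vtx E, ∀ y ∈ Vtx E, x ≠ y → ¬ E x y → checkd E d x y < hatd E d x y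

/-- A floppy graph metric: `ď(x,y) < d̂(x,y)` for every `xy ∈ [V]² \ E`. -/
def FloppyMetric (E : X → X → Prop) (d : X → X → ℝ) : Prop :=
  IsGraphMetric E d ∧
    ∀ x ∈ Vtx E, ∀ y ∈ Vtx E, x ≠ y → ¬ E x y → checkd E d x y < hatd E d x y

/-- The edge relation of the one-step extension `E ∪ {xy}`. -/
def extEdge (E : X → X → Prop) (x y : X) : X → X → Prop :=
  fun a b => E a b ∨ (a = x ∧ b = y) ∨ (a = y ∧ b = x)

/-- The weight function of the one-step extension `d ∪ {⟨xy, r⟩}`. -/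
noncomputable def extWt (d : X → X → ℝ) (x y : X) (r : ℝ) : X → X → ℝ :=
  fun a b => if (a = x ∧ b = y) ∨ (a = y ∧ b = x) then r else d a b

/-- The set `[V]² \ E` of unordered pairs of distinct vertices that are not edges. -/
def nonEdgePairs (E : X → X → Prop) : Set (Sym2 X) :=
  {e | ∃ a b : X, e = s(a, b) ∧ a ≠ b ∧ a ∈ Vtx E ∧ b ∈ Vtx E ∧ ¬ E a b}

/-- A set of (unordered) weighted pairs, presented as a relation `R`, is a full metric
on `V`: it is symmetric, its domain is exactly `[V]²`, it is single-valued, positive,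
and satisfies the triangle inequality. -/
def IsFullMetricRel (V : Set X) (R : X → X → ℝ → Prop) : Prop :=
  (∀ a b r, R a b r → R b a r) ∧
  (∀ a b r, R a b r → a ∈ V ∧ b ∈ V ∧ a ≠ b) ∧
  (∀ a b, a ∈ V → b ∈ V → a ≠ b → ∃ r, R a b r) ∧
  (∀ a b r s, R a b r → R a b s → r = s) ∧
  (∀ a b r, R a b r → 0 < r) ∧
  (∀ a b c r s t, R a b r → R b c s → R a c t → t ≤ r + s)

/-- A weight function `D` on `[V]²` is a full metric on `V`. -/
def IsFullMetricOn (V : Set X) (D : X → X → ℝ) : Prop :=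
  (∀ a b, a ∈ V → b ∈ V → a ≠ b → D a b = D b a) ∧
  (∀ a b, a ∈ V → b ∈ V → a ≠ b → 0 < D a b) ∧
  (∀ a b c, a ∈ V → b ∈ V → c ∈ V → a ≠ b → b ≠ c → a ≠ c → D a c ≤ D a b + D b c)

/-- Player I has a winning strategy in the metric-extending game `Game_d(lam, Fam)`:
there are functions `S1, S2` choosing, for each inning `β < lam` and each sequence of
previous answers of player II, a legal doubleton in `[V]²` and a set from `Fam`, such that
for every play of player II respecting the strategy, the resulting relation
`d ∪ {⟨x_α y_α, r_α⟩ : α < lam}` is a full metric on `V`. -/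
def WinningStratI (V : Set X) (E : X → X → Prop) (d : X → X → ℝ)
    (lam : Ordinal.{u}) (Fam : Set (Set ℝ)) : Prop :=
  ∃ (S1 : ∀ β : Ordinal.{u}, β < lam → (∀ α : Ordinal.{u}, α < β → ℝ) → X × X)
    (S2 : ∀ β : Ordinal.{u}, β < lam → (∀ α : Ordinal.{u}, α < β → ℝ) → Set ℝ),
    (∀ β hβ s, S2 β hβ s ∈ Fam) ∧
    (∀ β hβ s, (S1 β hβ s).1 ∈ V ∧ (S1 β hβ s).2 ∈ V ∧ (S1 β hβ s).1 ≠ (S1 β hβ s).2) ∧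
    (∀ s : ∀ α : Ordinal.{u}, α < lam → ℝ,
      (∀ α (hα : α < lam), s α hα ∈ S2 α hα (fun γ hγ => s γ (hγ.trans hα))) →
      IsFullMetricRel V (fun a b r =>
        (E a b ∧ r = d a b) ∨
        ∃ α, ∃ hα : α < lam,
          ((a = (S1 α hα (fun γ hγ => s γ (hγ.trans hα))).1 ∧
            b = (S1 α hα (fun γ hγ => s γ (hγ.trans hα))).2) ∨
           (a = (S1 α hα (fun γ hγ => s γ (hγ.trans hα))).2 ∧
            b = (S1 α hα (fun γ hγ => s γ (hγ.trans hα))).1)) ∧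
          r = s α hα))

/-- Player II has a winning strategy in the metric-extending game `Game_d(lam, Fam)`:
there is a function `T` assigning to each inning `β < lam` and each sequence of moves of
player I (of length `β + 1`) an answer in the set component of the last move, such that
for every legal play of player I, the resulting relation is not a full metric on `V`. -/
def WinningStratII (V : Set X) (E : X → X → Prop) (d : X → X → ℝ)
    (lam : Ordinal.{u}) (Fam : Set (Set ℝ)) : Prop :=
  ∃ T : ∀ β : Ordinal.{u}, β < lam → (∀ α : Ordinal.{u}, α ≤ β → (X × X) × Set ℝ) → ℝ,
    (∀ β hβ p, (p β le_rfl).2 ∈ Fam → T β hβ p ∈ (p β le_rfl).2) ∧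
    (∀ p : ∀ α : Ordinal.{u}, α < lam → (X × X) × Set ℝ,
      (∀ α hα, (p α hα).1.1 ∈ V ∧ (p α hα).1.2 ∈ V ∧ (p α hα).1.1 ≠ (p α hα).1.2 ∧
        (p α hα).2 ∈ Fam) →
      ¬ IsFullMetricRel V (fun a b r =>
        (E a b ∧ r = d a b) ∨
        ∃ α, ∃ hα : α < lam,
          ((a = (p α hα).1.1 ∧ b = (p α hα).1.2) ∨
           (a = (p α hα).1.2 ∧ b = (p α hα).1.1)) ∧
          r = T α hα (fun γ hγ => p γ (lt_of_le_of_lt hγ hα))))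

/-- The edge relation of the glued graph `E_d = E_p ∪ ⋃_{f ∈ F} E_f`. -/
def gluedEdge (Ep : X → X → Prop) (F : Set ((X → X → Prop) × (X → X → ℝ))) :
    X → X → Prop :=
  fun a b => Ep a b ∨ ∃ f ∈ F, f.1 a b

/-- `Λ(v; B) = inf {d̂(a,v) + d̂(v,b) - d̂(a,b) : a, b ∈ B}`. -/
noncomputable def Lam (E : X → X → Prop) (d : X → X → ℝ) (v : X) (B : Set X) : ℝ :=
  sInf {r | ∃ a ∈ B, ∃ b ∈ B, r = hatd E d a v + hatd E d v b - hatd E d a b}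

/-- The gluing setup: a graph pseudometric `p = (Ep, wp)` and a family `F` of graph
pseudometrics such that each member meets `V_p`, agrees with `p̂` on the intersection of
the vertex sets, and distinct members only meet inside `V_p`; `wd` is the glued weight
function `d = p ∪ ⋃ F` on `E_d = E_p ∪ ⋃_{f ∈ F} E_f`. -/
structure GluingSetup (Ep : X → X → Prop) (wp : X → X → ℝ)
    (F : Set ((X → X → Prop) × (X → X → ℝ))) (wd : X → X → ℝ) : Prop where
  hp : IsGraphPseudometric Ep wp
  hF : ∀ f ∈ F, IsGraphPseudometric f.1 f.2
  meet : ∀ f ∈ F, (Vtx f.1 ∩ Vtx Ep).Nonempty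
  agree : ∀ f ∈ F, ∀ x ∈ Vtx f.1 ∩ Vtx Ep, ∀ y ∈ Vtx f.1 ∩ Vtx Ep, x ≠ y →
    hatd f.1 f.2 x y = hatd Ep wp x y
  inter_sub : ∀ f ∈ F, ∀ g ∈ F, f ≠ g → Vtx f.1 ∩ Vtx g.1 ⊆ Vtx Ep
  wd_p : ∀ ⦃a b⦄, Ep a b → wd a b = wp a b
  wd_F : ∀ f ∈ F, ∀ ⦃a b⦄, f.1 a b → wd a b = f.2 a b


/-- A metric `D` on `V` is floppy relative to a graph `E` if every non-edge `uv` has a length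
strictly exceeding, uniformly over the edges `ab`, the lower bound `D a b - D a u - D v b`. -/
structure IsFloppyRel {V : Type u} (E : V → V → Prop) (D : V → V → ℝ) : Prop where
  symm : ∀ a b, E a b → E b a
  self : ∀ a, D a a = 0
  comm : ∀ a b, D a b = D b a
  tri : ∀ a b c, D a c ≤ D a b + D b c
  pos : ∀ a b, a ≠ b → 0 < D a b
  gap : ∀ u v, u ≠ v → ¬ E u v →
    ∃ ε > 0, ∀ a b, E a b → D a b + ε ≤ D a u + D u v + D v b

/-- The distance obtained from `D` by adding an edge `xy` of length `r`. -/
noncomputable def shortcut {V : Type u} (D : V → V → ℝ) (x y : V) (r : ℝ) (u v : V) : ℝ :=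
  min (D u v) (min (D u x + r + D y v) (D u y + r + D x v))

/-- A dense subset of `(0, ∞)` meets every interval outside any given finite set. -/
lemma exists_mem_Ioo_notMem_of_dense {F : Set ℝ}
    (hF : ∀ t ∈ Set.Ioi (0 : ℝ), ∀ ε : ℝ, 0 < ε → ∃ s ∈ F, |s - t| < ε)
    {S : Set ℝ} (hS : S.Finite) {l m : ℝ} (hl : 0 ≤ l) (hlm : l < m) :
    ∃ s ∈ F, s ∈ Set.Ioo l m ∧ s ∉ S := by
  obtain ⟨t, ht⟩ := ((Set.Ioo_infinite hlm).sdiff hS).nonempty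
  obtain ⟨ε, hε, hball⟩ := Metric.isOpen_iff.1 (isOpen_Ioo.sdiff hS.isClosed) t ht
  obtain ⟨s, hsF, hs⟩ := hF t (hl.trans_lt ht.1.1) ε hε
  exact ⟨s, hsF, hball (by simpa [Real.dist_eq] using hs)⟩

namespace IsFloppyRel

variable {V : Type u} {E : V → V → Prop} {D : V → V → ℝ}

lemma nonneg (h : IsFloppyRel E D) (a b : V) : 0 ≤ D a b := by
  have := h.tri a b a
  rw [h.self, h.comm b a] at this
  linarith

lemma shortcut_le (D : V → V → ℝ) (x y : V) (r : ℝ) (u v : V) :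
    shortcut D x y r u v ≤ D u v ∧ shortcut D x y r u v ≤ D u x + r + D y v ∧
      shortcut D x y r u v ≤ D u y + r + D x v :=
  ⟨min_le_left _ _, (min_le_right _ _).trans (min_le_left _ _),
    (min_le_right _ _).trans (min_le_right _ _)⟩

lemma shortcut_cases (D : V → V → ℝ) (x y : V) (r : ℝ) (u v : V) :
    shortcut D x y r u v = D u v ∨ shortcut D x y r u v = D u x + r + D y v ∨
      shortcut D x y r u v = D u y + r + D x v := by
  unfold shortcut
  rcases min_choice (D u v) (min (D u x + r + D y v) (D u y + r + D x v)) with h | h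
  · exact Or.inl h
  · rw [h]
    exact Or.inr (min_choice _ _)

lemma shortcut_comm (h : IsFloppyRel E D) (x y : V) (r : ℝ) (u v : V) :
    shortcut D x y r u v = shortcut D x y r v u := by
  unfold shortcut
  rw [min_comm (D u x + r + D y v), h.comm u v, h.comm u x, h.comm u y, h.comm x v, h.comm y v]
  congr 2 <;> ring

lemma shortcut_tri (h : IsFloppyRel E D) (x y : V) {r : ℝ} (hr : 0 < r) (u v w : V) :
    shortcut D x y r u w ≤ shortcut D x y r u v + shortcut D x y r v w := by
  obtain ⟨h1, h2, h3⟩ := shortcut_le D x y r u w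
  have t := h.tri u v w
  have tx := h.tri u v x
  have ty := h.tri u v y
  have sx := h.tri x v w
  have sy := h.tri y v w
  have n1 := h.nonneg v x
  have n2 := h.nonneg v y
  have c1 := h.comm v x
  have c2 := h.comm v y
  have qx := h.tri u x w
  have qy := h.tri u y w
  rcases shortcut_cases D x y r u v with e | e | e <;>
    rcases shortcut_cases D x y r v w with f | f | f <;> rw [e, f] <;> linarith

lemma shortcut_eq_of_edge (h : IsFloppyRel E D) {x y : V} {r : ℝ}
    (hr : ∀ a b, E a b → D a b ≤ D a x + r + D y b) {a b : V} (hab : E a b) :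
    shortcut D x y r a b = D a b := by
  refine min_eq_left (le_min (hr a b hab) ?_)
  have := hr b a (h.symm a b hab)
  rw [h.comm a b, h.comm a y, h.comm x b]
  linarith

lemma shortcut_self (h : IsFloppyRel E D) (x y : V) {r : ℝ} (hr : 0 < r) (a : V) :
    shortcut D x y r a a = 0 := by
  have := h.nonneg
  unfold shortcut
  rw [h.self, min_eq_left (le_min _ _)] <;> linarith [this a x, this a y, this x a, this y a]

lemma shortcut_pair (h : IsFloppyRel E D) {x y : V} {r : ℝ} (hr : 0 < r) (hxy : r < D x y) :
    shortcut D x y r x y = r := by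
  unfold shortcut
  rw [h.self x, h.self y, min_eq_left (b := D x y + r + D x y) (by linarith),
    min_eq_right (by linarith)]
  ring

lemma shortcut_pos (h : IsFloppyRel E D) (x y : V) {r : ℝ} (hr : 0 < r) {a b : V} (hab : a ≠ b) :
    0 < shortcut D x y r a b := by
  have := h.nonneg
  refine lt_min (h.pos a b hab) (lt_min ?_ ?_) <;>
    linarith [this a x, this a y, this x b, this y b]

lemma le_shortcut_through (h : IsFloppyRel E D) {x y : V} {r δ : ℝ} (hr0 : 0 < r)
    (hr : ∀ a b, E a b → D a b + δ ≤ D a x + r + D y b) {a b : V} (hab : E a b) :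
    D a b + min δ r ≤ shortcut D x y r a x + r + shortcut D x y r y b := by
  have m1 := min_le_left δ r
  have m2 := min_le_right δ r
  have k1 := hr a b hab
  have k2 := hr b a (h.symm a b hab)
  rw [h.comm b a, h.comm b x, h.comm y a] at k2
  have tx := h.tri a x b
  have ty := h.tri a y b
  have n1 := h.nonneg x y
  have c1 := h.comm x y
  have s1 := h.self x
  have s2 := h.self y
  rcases shortcut_cases D x y r a x with e | e | e <;>
    rcases shortcut_cases D x y r y b with f | f | f <;> rw [e, f] <;> linarith

lemma le_shortcut_through_swap (h : IsFloppyRel E D) {x y : V} {r δ : ℝ} (hr0 : 0 < r)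
    (hr : ∀ a b, E a b → D a b + δ ≤ D a x + r + D y b) {a b : V} (hab : E a b) :
    D a b + min δ r ≤ shortcut D x y r a y + r + shortcut D x y r x b := by
  have := h.le_shortcut_through hr0 hr (h.symm a b hab)
  rw [h.comm a b, h.shortcut_comm x y r a y, h.shortcut_comm x y r x b]
  linarith

lemma shortcut_gap_edge (h : IsFloppyRel E D) {x y : V} {r δ ε : ℝ} (hr0 : 0 < r)
    (hr : ∀ a b, E a b → D a b + δ ≤ D a x + r + D y b) {u v : V}
    (hε : ∀ a b, E a b → D a b + ε ≤ D a u + D u v + D v b) {a b : V} (hab : E a b) :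
    D a b + min ε (min δ r) ≤
      shortcut D x y r a u + shortcut D x y r u v + shortcut D x y r v b := by
  have m1 := min_le_left ε (min δ r)
  have m2 := min_le_right ε (min δ r)
  have k1 := h.le_shortcut_through hr0 hr hab
  have k2 := h.le_shortcut_through_swap hr0 hr hab
  have T := h.shortcut_tri x y hr0
  have L := fun u v => (shortcut_le D x y r u v).1
  rcases shortcut_cases D x y r u v with e | e | e
  · rcases shortcut_cases D x y r a u with f | f | f
    · rcases shortcut_cases D x y r v b with g | g | g
      · rw [e, f, g]
        linarith [hε a b hab]
      · linarith [T a u x, T u v x, L v x, L y b]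
      · linarith [T a u y, T u v y, L v y, L x b]
    · linarith [T y u b, T u v b, L a x, L y u]
    · linarith [T x u b, T u v b, L a y, L x u]
  · linarith [T a u x, L u x, T y v b, L y v]
  · linarith [T a u y, L u y, T x v b, L x v]

lemma shortcut_gap_pair (h : IsFloppyRel E D) {x y : V} {r : ℝ} (hr0 : 0 < r)
    (hxy : r < D x y) {u v : V} (huv : u ≠ v) (hne : ¬ (u = x ∧ v = y)) :
    r < shortcut D x y r x u + shortcut D x y r u v + shortcut D x y r v y := by
  have N : ∀ a b, 0 ≤ shortcut D x y r a b := fun a b => by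
    rcases eq_or_ne a b with rfl | hab
    · rw [h.shortcut_self x y hr0]
    · exact (h.shortcut_pos x y hr0 hab).le
  have P := h.shortcut_pos x y hr0 huv
  have M := h.nonneg
  rcases shortcut_cases D x y r x u with f | f | f
  · rcases shortcut_cases D x y r v y with g | g | g
    · have hmove : x ≠ u ∨ v ≠ y := by
        by_contra! hc
        exact hne ⟨hc.1.symm, hc.2⟩
      have hpos : 0 < D x u + D v y := by
        rcases hmove with k | k
        · linarith [h.pos _ _ k, M v y]
        · linarith [h.pos _ _ k, M x u]
      rcases shortcut_cases D x y r u v with e | e | e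
      · linarith [h.tri x u y, h.tri u v y]
      · linarith [M u x, M y v]
      · linarith [M u y, M x v]
    · linarith [N x u, M v x, M y y]
    · linarith [N x u, M v y, M x y]
  · linarith [N v y, M x x, M y u]
  · linarith [N v y, M x y, M x u]

/-- Adding an edge of admissible length preserves floppiness. -/
lemma extend (h : IsFloppyRel E D) {x y : V} {r δ : ℝ} (hr0 : 0 < r) (hδ : 0 < δ)
    (hxy : r < D x y) (hr : ∀ a b, E a b → D a b + δ ≤ D a x + r + D y b) :
    IsFloppyRel (extEdge E x y) (shortcut D x y r) where
  symm a b hab := by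
    rcases hab with k | k | k
    · exact Or.inl (h.symm a b k)
    · exact Or.inr (Or.inr k.symm)
    · exact Or.inr (Or.inl k.symm)
  self := h.shortcut_self x y hr0
  comm := h.shortcut_comm x y r
  tri := h.shortcut_tri x y hr0
  pos _ _ := h.shortcut_pos x y hr0
  gap u v huv hE := by
    simp only [extEdge, not_or] at hE
    obtain ⟨hE, hne, hne'⟩ := hE
    obtain ⟨ε, hε, hgap⟩ := h.gap u v huv hE
    have p1 := h.shortcut_gap_pair hr0 hxy huv hne
    have p2 := h.shortcut_gap_pair hr0 hxy huv.symm fun k => hne' k.symm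
    have C := h.shortcut_comm x y r
    rw [C x v, C v u, C u y] at p2
    have e1 := h.shortcut_pair hr0 hxy
    set S := shortcut D x y r with hS
    refine ⟨min (min ε (min δ r)) (min (S x u + S u v + S v y - r) (S y u + S u v + S v x - r)),
      ?_, ?_⟩
    · refine lt_min (lt_min hε (lt_min hδ hr0)) (lt_min ?_ ?_) <;> linarith
    · rintro a b (hab | ⟨rfl, rfl⟩ | ⟨rfl, rfl⟩)
      · rw [hS, h.shortcut_eq_of_edge (fun a b hab => by linarith [hr a b hab]) hab, ← hS]
        have := h.shortcut_gap_edge hr0 hr hgap hab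
        rw [← hS] at this
        exact (add_le_add_right (min_le_left _ _) _).trans this
      · have := (min_le_right (min ε (min δ r)) _).trans
          (min_le_left (S a u + S u v + S v b - r) (S b u + S u v + S v a - r))
        linarith
      · have := (min_le_right (min ε (min δ r)) _).trans
          (min_le_right (S b u + S u v + S v a - r) (S a u + S u v + S v b - r))
        linarith [C a b]

lemma exists_extend (h : IsFloppyRel E D) {x y : V} (hne : x ≠ y) (hE : ¬ E x y) {F : Set ℝ}
    (hF : ∀ t ∈ Set.Ioi (0 : ℝ), ∀ ε : ℝ, 0 < ε → ∃ s ∈ F, |s - t| < ε)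
    {S : Set ℝ} (hS : S.Finite) :
    ∃ D' : V → V → ℝ, IsFloppyRel (extEdge E x y) D' ∧ (∀ a b, E a b → D' a b = D a b) ∧
      D' x y ∈ F ∧ D' x y ∉ S := by
  obtain ⟨ε, hε, hgap⟩ := h.gap x y hne hE
  have hpos := h.pos x y hne
  obtain ⟨r, hrF, ⟨hr1, hr2⟩, hrS⟩ := exists_mem_Ioo_notMem_of_dense hF hS
    (l := max 0 (D x y - ε)) (m := D x y) (le_max_left _ _) (max_lt hpos (by linarith))
  obtain ⟨hr0, hr1⟩ := max_lt_iff.1 hr1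
  refine ⟨shortcut D x y r, h.extend hr0 (δ := r - (D x y - ε)) (by linarith) hr2
    fun a b hab => by linarith [hgap a b hab], fun a b hab =>
    h.shortcut_eq_of_edge (fun a b hab => by linarith [hgap a b hab]) hab, ?_⟩
  rw [h.shortcut_pair hr0 hr2]
  exact ⟨hrF, hrS⟩

end IsFloppyRel

section ShortestPath

variable {E : X → X → Prop} {d : X → X → ℝ}

lemma walkSums_bddBelow (hd : IsGraphPseudometric E d) (x y : X) :
    BddBelow (walkSums E d x y) := by
  refine ⟨0, ?_⟩
  rintro s ⟨n, c, -, -, hc, rfl⟩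
  exact Finset.sum_nonneg fun i hi => hd.nonneg (hc i (Finset.mem_range.1 hi))

lemma walkSums_nonempty (hd : IsGraphPseudometric E d) {x y : X} (hx : x ∈ Vtx E)
    (hy : y ∈ Vtx E) : (walkSums E d x y).Nonempty := by
  obtain ⟨n, c, h0, hn, hc⟩ := hd.connected x hx y hy
  exact ⟨_, n, c, h0, hn, hc, rfl⟩

lemma hatd_nonneg (hd : IsGraphPseudometric E d) (x y : X) : 0 ≤ hatd E d x y := by
  refine Real.sInf_nonneg ?_
  rintro s ⟨n, c, -, -, hc, rfl⟩
  exact Finset.sum_nonneg fun i hi => hd.nonneg (hc i (Finset.mem_range.1 hi))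

lemma hatd_self (hd : IsGraphPseudometric E d) (x : X) : hatd E d x x = 0 :=
  le_antisymm (csInf_le (walkSums_bddBelow hd x x)
    ⟨0, fun _ => x, rfl, rfl, fun _ hi => absurd hi (Nat.not_lt_zero _), by simp⟩)
    (hatd_nonneg hd x x)

lemma walkSums_subset_swap (hd : IsGraphPseudometric E d) (x y : X) :
    walkSums E d x y ⊆ walkSums E d y x := by
  rintro s ⟨n, c, h0, hn, hc, rfl⟩
  have hstep : ∀ i, i < n → c (n - i) = c (n - 1 - i + 1) := fun i hi => by
    congr 1
    omega
  refine ⟨n, fun i => c (n - i), by simpa using hn, by simpa using h0, fun i hi => ?_, ?_⟩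
  · have := hd.symm (hc (n - 1 - i) (by omega))
    rw [← hstep i hi] at this
    simpa [Nat.sub_sub, add_comm] using this
  · rw [← Finset.sum_range_reflect]
    refine Finset.sum_congr rfl fun i hi => ?_
    have hi := Finset.mem_range.1 hi
    rw [hd.wt_symm (hc (n - 1 - i) (by omega)), ← hstep i hi, Nat.sub_sub, add_comm 1 i]

lemma hatd_comm (hd : IsGraphPseudometric E d) (x y : X) : hatd E d x y = hatd E d y x :=
  congrArg sInf ((walkSums_subset_swap hd x y).antisymm (walkSums_subset_swap hd y x))

lemma add_mem_walkSums {x y z : X} {s t : ℝ} (hs : s ∈ walkSums E d x y)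
    (ht : t ∈ walkSums E d y z) : s + t ∈ walkSums E d x z := by
  obtain ⟨n, c, h0, hn, hc, rfl⟩ := hs
  obtain ⟨m, e, g0, gm, he, rfl⟩ := ht
  set w : ℕ → X := fun i => if i < n then c i else e (i - n) with hw
  have w1 : ∀ i, i ≤ n → w i = c i := fun i hi => by
    rcases hi.lt_or_eq with h | rfl
    · simp [hw, h]
    · simp [hw, g0, hn]
  have w2 : ∀ j, w (n + j) = e j := fun j => by simp [hw]
  refine ⟨n + m, w, by rw [w1 0 (Nat.zero_le _), h0], by rw [w2, gm], fun i hi => ?_, ?_⟩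
  · rcases lt_or_ge i n with h | h
    · rw [w1 i h.le, w1 (i + 1) h]
      exact hc i h
    · obtain ⟨j, rfl⟩ := Nat.exists_eq_add_of_le h
      rw [add_assoc, w2, w2]
      exact he j (by omega)
  · rw [Finset.sum_range_add]
    congr 1
    · refine Finset.sum_congr rfl fun i hi => ?_
      have hi := Finset.mem_range.1 hi
      rw [w1 i hi.le, w1 (i + 1) hi]
    · refine Finset.sum_congr rfl fun i _ => ?_
      rw [add_assoc, w2, w2]

lemma hatd_triangle (hd : IsGraphPseudometric E d) {x y z : X} (hx : x ∈ Vtx E)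
    (hy : y ∈ Vtx E) (hz : z ∈ Vtx E) :
    hatd E d x z ≤ hatd E d x y + hatd E d y z := by
  refine le_of_forall_pos_le_add fun ε hε => ?_
  obtain ⟨s, hs, hs'⟩ := exists_lt_of_csInf_lt (walkSums_nonempty hd hx hy)
    (lt_add_of_pos_right (hatd E d x y) (half_pos hε))
  obtain ⟨t, ht, ht'⟩ := exists_lt_of_csInf_lt (walkSums_nonempty hd hy hz)
    (lt_add_of_pos_right (hatd E d y z) (half_pos hε))
  have : hatd E d x z ≤ s + t :=
    csInf_le (walkSums_bddBelow hd x z) (add_mem_walkSums hs ht)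
  linarith

lemma checkd_set_bddAbove (hd : IsGraphPseudometric E d) {x y : X} (hx : x ∈ Vtx E)
    (hy : y ∈ Vtx E) :
    BddAbove ({0} ∪ {r | ∃ a b, E a b ∧ r = d a b - hatd E d a x - hatd E d y b}) := by
  refine ⟨hatd E d x y, ?_⟩
  rintro s (rfl | ⟨a, b, hab, rfl⟩)
  · exact hatd_nonneg hd x y
  · have ha : a ∈ Vtx E := ⟨b, hab⟩
    have hb : b ∈ Vtx E := ⟨a, hd.symm hab⟩
    rw [hd.edge_eq hab]
    linarith [hatd_triangle hd ha hx hb, hatd_triangle hd hx hy hb]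

/-- The shortest-path metric of a floppy graph metric is floppy relative to its graph. -/
lemma FloppyMetric.isFloppyRel (hp : FloppyMetric E d) :
    IsFloppyRel (V := Vtx E) (fun a b => E a b) (fun a b => hatd E d a b) := by
  obtain ⟨⟨hd, hpos⟩, hflop⟩ := hp
  have hle : ∀ x ∈ Vtx E, ∀ y ∈ Vtx E, 0 ≤ checkd E d x y := fun x hx y hy =>
    le_csSup (checkd_set_bddAbove hd hx hy) (Or.inl rfl)
  refine ⟨fun a b hab => hd.symm hab, fun a => hatd_self hd a, fun a b => hatd_comm hd a b,
    fun a b c => hatd_triangle hd a.2 b.2 c.2, fun a b hab => ?_, fun u v huv hE => ?_⟩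
  · by_cases h : E a b
    · exact (hd.edge_eq h).symm ▸ hpos h
    · exact (hle a a.2 b b.2).trans_lt (hflop a a.2 b b.2 (Subtype.coe_ne_coe.2 hab) h)
  · refine ⟨_, sub_pos.2 (hflop u u.2 v v.2 (Subtype.coe_ne_coe.2 huv) hE), fun a b hab => ?_⟩
    have : d a b - hatd E d a u - hatd E d v b ≤ checkd E d u v :=
      le_csSup (checkd_set_bddAbove hd u.2 v.2) (Or.inr ⟨a, b, hab, rfl⟩)
    rw [hd.edge_eq hab] at this
    linarith

end ShortestPath

section Selector

variable {V : Type u}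

/-- A partial extension of the floppy pair `(E₀, D₀)` to a larger graph `G.1` with metric `G.2`:
the finitely many new lengths are pairwise distinct and selected from the sets `F a b`. -/
structure IsPartialSelector (E₀ : V → V → Prop) (D₀ : V → V → ℝ) (F : V → V → Set ℝ)
    (G : (V → V → Prop) × (V → V → ℝ)) : Prop where
  floppy : IsFloppyRel G.1 G.2
  base : ∀ a b, E₀ a b → G.1 a b ∧ G.2 a b = D₀ a b
  mem : ∀ a b, G.1 a b → ¬ E₀ a b → G.2 a b ∈ F a b
  inj : ∀ a b a' b', G.1 a b → ¬ E₀ a b → G.1 a' b' → ¬ E₀ a' b' → G.2 a b = G.2 a' b' →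
    (a' = a ∧ b' = b) ∨ (a' = b ∧ b' = a)
  finite : {s | ∃ a b, G.1 a b ∧ ¬ E₀ a b ∧ s = G.2 a b}.Finite

variable {E₀ : V → V → Prop} {D₀ : V → V → ℝ} {F : V → V → Set ℝ}

lemma IsPartialSelector.exists_step
    (hF : ∀ a b, a ≠ b → ¬ E₀ a b → F a b = F b a ∧
      ∀ t ∈ Set.Ioi (0 : ℝ), ∀ ε : ℝ, 0 < ε → ∃ s ∈ F a b, |s - t| < ε)
    {G : (V → V → Prop) × (V → V → ℝ)} (hG : IsPartialSelector E₀ D₀ F G) (e : V × V) :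
    ∃ G', IsPartialSelector E₀ D₀ F G' ∧
      (∀ a b, G.1 a b → G'.1 a b ∧ G'.2 a b = G.2 a b) ∧ (e.1 ≠ e.2 → G'.1 e.1 e.2) := by
  obtain ⟨x, y⟩ := e
  by_cases hskip : x = y ∨ G.1 x y
  · exact ⟨G, hG, fun a b h => ⟨h, rfl⟩, fun h => hskip.resolve_left h⟩
  obtain ⟨hne, hE⟩ := not_or.1 hskip
  have hE₀ : ¬ E₀ x y := fun h => hE (hG.base x y h).1
  obtain ⟨hFsymm, hFdense⟩ := hF x y hne hE₀
  obtain ⟨D', hD', hext, hmem, hnew⟩ := hG.floppy.exists_extend hne hE hFdense hG.finite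
  have hnew' : ∀ a b, G.1 a b → ¬ E₀ a b → D' a b ≠ D' x y := fun a b hab hab₀ h =>
    hnew ⟨a, b, hab, hab₀, by rw [← hext a b hab, h]⟩
  have hval : ∀ a b, (a = x ∧ b = y) ∨ (a = y ∧ b = x) → D' a b = D' x y := by
    rintro a b (⟨rfl, rfl⟩ | ⟨rfl, rfl⟩)
    · rfl
    · exact hD'.comm a b
  refine ⟨(extEdge G.1 x y, D'), ⟨hD', fun a b h => ?_, fun a b h h₀ => ?_, ?_, ?_⟩,
    fun a b h => ⟨Or.inl h, hext a b h⟩, fun _ => Or.inr (Or.inl ⟨rfl, rfl⟩)⟩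
  · exact ⟨Or.inl (hG.base a b h).1, (hext a b (hG.base a b h).1).trans (hG.base a b h).2⟩
  · rcases h with h | ⟨rfl, rfl⟩ | ⟨rfl, rfl⟩
    · change D' a b ∈ F a b
      rw [hext a b h]
      exact hG.mem a b h h₀
    · exact hmem
    · change D' a b ∈ F a b
      rw [hD'.comm a b, ← hFsymm]
      exact hmem
  · intro a b a' b' h h₀ h' h₀' heq
    rcases h with h | h <;> rcases h' with h' | h'
    · refine hG.inj a b a' b' h h₀ h' h₀' ?_
      rw [← hext a b h, ← hext a' b' h']
      exact heq
    · exact absurd (heq.trans (hval a' b' h')) (hnew' a b h h₀)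
    · exact absurd (heq.symm.trans (hval a b h)) (hnew' a' b' h' h₀')
    · rcases h with ⟨rfl, rfl⟩ | ⟨rfl, rfl⟩
      · exact h'
      · exact h'.symm
  · refine (hG.finite.insert (D' x y)).subset ?_
    rintro s ⟨a, b, h | h, h₀, rfl⟩
    · exact Or.inr ⟨a, b, h, h₀, hext a b h⟩
    · exact Or.inl (hval a b h)

/-- A floppy pair with countably many non-edges extends to a metric whose values on the non-edges
are distinct and selected from prescribed dense sets. -/
lemma IsFloppyRel.exists_selector [Nonempty V] (h : IsFloppyRel E₀ D₀)
    (hcount : {e : V × V | e.1 ≠ e.2 ∧ ¬ E₀ e.1 e.2}.Countable)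
    (hF : ∀ a b, a ≠ b → ¬ E₀ a b → F a b = F b a ∧
      ∀ t ∈ Set.Ioi (0 : ℝ), ∀ ε : ℝ, 0 < ε → ∃ s ∈ F a b, |s - t| < ε) :
    ∃ D : V → V → ℝ, (∀ a b, a ≠ b → D a b = D b a) ∧ (∀ a b, a ≠ b → 0 < D a b) ∧
      (∀ a b c, a ≠ b → b ≠ c → a ≠ c → D a c ≤ D a b + D b c) ∧
      (∀ a b, E₀ a b → D a b = D₀ a b) ∧ (∀ a b, a ≠ b → ¬ E₀ a b → D a b ∈ F a b) ∧
      ∀ a b a' b', a ≠ b → ¬ E₀ a b → a' ≠ b' → ¬ E₀ a' b' → D a b = D a' b' →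
        (a' = a ∧ b' = b) ∨ (a' = b ∧ b' = a) := by
  obtain ⟨e, he⟩ := Set.countable_iff_exists_subset_range.1 hcount
  have h0 : IsPartialSelector E₀ D₀ F (E₀, D₀) :=
    ⟨h, fun a b hab => ⟨hab, rfl⟩, fun a b hab hn => absurd hab hn,
      fun a b a' b' hab hn => absurd hab hn,
      Set.finite_empty.subset fun s ⟨a, b, hab, hn, _⟩ => hn hab⟩
  choose next hnext hmono hedge using
    fun (G : {G // IsPartialSelector E₀ D₀ F G}) => G.2.exists_step hF
  let seq : ℕ → {G // IsPartialSelector E₀ D₀ F G} :=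
    fun n => Nat.rec ⟨(E₀, D₀), h0⟩ (fun k G => ⟨next G (e k), hnext G (e k)⟩) n
  have hseq : ∀ m n, m ≤ n → ∀ a b, (seq m).1.1 a b →
      (seq n).1.1 a b ∧ (seq n).1.2 a b = (seq m).1.2 a b := by
    intro m n hmn a b hab
    induction n, hmn using Nat.le_induction with
    | base => exact ⟨hab, rfl⟩
    | succ k _ ih =>
      have := hmono (seq k) (e k) a b ih.1
      exact ⟨this.1, this.2.trans ih.2⟩
  have hcover : ∀ a b, a ≠ b → ∃ n, (seq n).1.1 a b := by
    intro a b hab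
    by_cases hE : E₀ a b
    · exact ⟨0, hE⟩
    · obtain ⟨n, hn⟩ := he (show (a, b) ∈ _ from ⟨hab, hE⟩)
      refine ⟨n + 1, ?_⟩
      have hstep : (seq (n + 1)).1 = next (seq n) (a, b) := congrArg (next (seq n)) hn
      rw [hstep]
      exact hedge (seq n) (a, b) hab
  let D : V → V → ℝ := fun a b =>
    if hab : ∃ n, (seq n).1.1 a b then (seq hab.choose).1.2 a b else 0
  have hD : ∀ n a b, (seq n).1.1 a b → D a b = (seq n).1.2 a b := by
    intro n a b hab
    have hex : ∃ n, (seq n).1.1 a b := ⟨n, hab⟩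
    have hc := hex.choose_spec
    simp only [D, dif_pos hex]
    rcases le_total n hex.choose with hle | hle
    · exact (hseq _ _ hle a b hab).2
    · exact (hseq _ _ hle a b hc).2.symm
  have hD₀ : ∀ a b, E₀ a b → D a b = D₀ a b := fun a b hab => hD 0 a b hab
  refine ⟨D, fun a b hab => ?_, fun a b hab => ?_, fun a b c hab hbc hac => ?_, hD₀,
    fun a b hab hn => ?_, fun a b a' b' hab hn hab' hn' heq => ?_⟩
  · obtain ⟨n, hE⟩ := hcover a b hab
    rw [hD n a b hE, hD n b a ((seq n).2.floppy.symm a b hE)]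
    exact (seq n).2.floppy.comm a b
  · obtain ⟨n, hE⟩ := hcover a b hab
    rw [hD n a b hE]
    exact (seq n).2.floppy.pos a b hab
  · obtain ⟨i, hi⟩ := hcover a b hab
    obtain ⟨j, hj⟩ := hcover b c hbc
    obtain ⟨k, hk⟩ := hcover a c hac
    have hi := (hseq i (max i (max j k)) (by omega) a b hi).1
    have hj := (hseq j (max i (max j k)) (by omega) b c hj).1
    have hk := (hseq k (max i (max j k)) (by omega) a c hk).1
    rw [hD _ _ _ hi, hD _ _ _ hj, hD _ _ _ hk]
    exact (seq _).2.floppy.tri a b c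
  · obtain ⟨n, hE⟩ := hcover a b hab
    rw [hD n a b hE]
    exact (seq n).2.mem a b hE hn
  · obtain ⟨i, hi⟩ := hcover a b hab
    obtain ⟨j, hj⟩ := hcover a' b' hab'
    have hi := (hseq i (max i j) (by omega) a b hi).1
    have hj := (hseq j (max i j) (by omega) a' b' hj).1
    rw [hD _ _ _ hi, hD _ _ _ hj] at heq
    exact (seq _).2.inj a b a' b' hi hn hj hn' heq

end Selector

/-- If `p` is a floppy graph metric with `[V]² \ E` at most countable,
then for any family `(F_e)` of dense subsets of `(0, ∞)` indexed by the non-edges there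
is an injective selector `r` such that `p ∪ r` is a full metric on `V`. -/
theorem exists_injective_selector_full_metric (E : X → X → Prop) (p : X → X → ℝ)
    (hp : FloppyMetric E p) (hcount : (nonEdgePairs E).Countable)
    (F : X → X → Set ℝ)
    (hFdense : ∀ a b, a ∈ Vtx E → b ∈ Vtx E → a ≠ b → ¬ E a b →
      F a b = F b a ∧ F a b ⊆ Set.Ioi (0 : ℝ) ∧
      ∀ t ∈ Set.Ioi (0 : ℝ), ∀ ε : ℝ, 0 < ε → ∃ s ∈ F a b, |s - t| < ε) :
    ∃ r : X → X → ℝ,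
      (∀ a b, a ∈ Vtx E → b ∈ Vtx E → a ≠ b → ¬ E a b →
        r a b = r b a ∧ r a b ∈ F a b) ∧
      (∀ a b a' b', a ∈ Vtx E → b ∈ Vtx E → a ≠ b → ¬ E a b →
        a' ∈ Vtx E → b' ∈ Vtx E → a' ≠ b' → ¬ E a' b' →
        ¬ ((a' = a ∧ b' = b) ∨ (a' = b ∧ b' = a)) → r a b ≠ r a' b') ∧
      IsFullMetricOn (Vtx E) (fun a b => if E a b then p a b else r a b) := by
  rcases isEmpty_or_nonempty (Vtx E) with hV | hV
  · have hv : ∀ a, a ∉ Vtx E := fun a ha => hV.false ⟨a, ha⟩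
    exact ⟨fun _ _ => 0, fun a _ ha => absurd ha (hv a), fun a _ _ _ ha => absurd ha (hv a),
      fun a _ ha => absurd ha (hv a), fun a _ ha => absurd ha (hv a),
      fun a _ _ ha => absurd ha (hv a)⟩
  have hd := hp.1.1
  have hcount' : {e : Vtx E × Vtx E | e.1 ≠ e.2 ∧ ¬ E e.1 e.2}.Countable := by
    have hpairs : {q : X × X | s(q.1, q.2) ∈ nonEdgePairs E}.Countable := by
      refine ((hcount.image fun e => e.out).union (hcount.image fun e => e.out.swap)).mono ?_
      intro q hq
      have hout : s(s(q.1, q.2).out.1, s(q.1, q.2).out.2) = s(q.1, q.2) := Quot.out_eq _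
      rcases Sym2.eq_iff.1 hout with h | h
      · exact Or.inl ⟨_, hq, Prod.ext h.1 h.2⟩
      · exact Or.inr ⟨_, hq, Prod.ext h.2 h.1⟩
    refine (hpairs.preimage (f := Prod.map Subtype.val Subtype.val)
      (Subtype.val_injective.prodMap Subtype.val_injective)).mono ?_
    rintro ⟨a, b⟩ ⟨hab, hE⟩
    exact ⟨a, b, rfl, Subtype.coe_ne_coe.2 hab, a.2, b.2, hE⟩
  obtain ⟨D, hcomm, hpos, htri, hbase, hmem, hinj⟩ :=
    hp.isFloppyRel.exists_selector (F := fun a b : Vtx E => F a b) hcount' fun a b hab hE =>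
      have := hFdense a b a.2 b.2 (Subtype.coe_ne_coe.2 hab) hE
      ⟨this.1, this.2.2⟩
  let r : X → X → ℝ := fun a b =>
    if h : a ∈ Vtx E ∧ b ∈ Vtx E then D ⟨a, h.1⟩ ⟨b, h.2⟩ else 0
  have hr : ∀ a b (ha : a ∈ Vtx E) (hb : b ∈ Vtx E), r a b = D ⟨a, ha⟩ ⟨b, hb⟩ :=
    fun a b ha hb => dif_pos ⟨ha, hb⟩
  have hne : ∀ {a b : X} (ha : a ∈ Vtx E) (hb : b ∈ Vtx E), a ≠ b →
      (⟨a, ha⟩ : Vtx E) ≠ ⟨b, hb⟩ := fun _ _ hab h => hab (congrArg Subtype.val h)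
  have hval : ∀ a b (ha : a ∈ Vtx E) (hb : b ∈ Vtx E),
      (if E a b then p a b else r a b) = D ⟨a, ha⟩ ⟨b, hb⟩ := by
    intro a b ha hb
    split_ifs with hE
    · rw [hd.edge_eq hE, hbase ⟨a, ha⟩ ⟨b, hb⟩ hE]
    · exact hr a b ha hb
  refine ⟨r, fun a b ha hb hab hE => ?_, fun a b a' b' ha hb hab hE ha' hb' hab' hE' hn heq => ?_,
    fun a b ha hb hab => ?_, fun a b ha hb hab => ?_, fun a b c ha hb hc hab hbc hac => ?_⟩
  · rw [hr a b ha hb, hr b a hb ha]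
    exact ⟨hcomm _ _ (hne ha hb hab), hmem _ _ (hne ha hb hab) hE⟩
  · rw [hr a b ha hb, hr a' b' ha' hb'] at heq
    have := hinj _ _ _ _ (hne ha hb hab) hE (hne ha' hb' hab') hE' heq
    simp only [Subtype.mk.injEq] at this
    exact hn this
  · dsimp only
    rw [hval a b ha hb, hval b a hb ha]
    exact hcomm _ _ (hne ha hb hab)
  · dsimp only
    rw [hval a b ha hb]
    exact hpos _ _ (hne ha hb hab)
  · dsimp only
    rw [hval a b ha hb, hval b c hb hc, hval a c ha hc]
    exact htri _ _ _ (hne ha hb hab) (hne hb hc hbc) (hne ha hc hac)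

end GraphMetricPaper
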